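/- arXiv:1702.02670 — 2 statements merged into one kernel-verified Lean document; each statement's English description precedes it below -/
import Mathlib

section
/- For the embedding ψ⁰ that sends every point of the cluster B_m to the point (m,0,…,0) ∈ ℝ^d, one has for all i ≠ j: if x_i and x_j lie in the same cluster then q(ψ⁰_i, ψ⁰_j) ≥ 1/(2a), and if x_i and x_j lie in different clusters then q(ψ⁰_i, ψ⁰_j) ≥ e^{−n²}/(2a). -/
/-!
The denominator of `q(ψ⁰ᵢ,ψ⁰ⱼ)` is at most the full sum over all points, which groups by cluster
into `a · ∑ₘ exp(-(c - m)²)` with `c` the cluster of `i`. This Gaussian sum over integers is less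
than `2` (over all of `ℤ` it is about `1.77`): each of its two tails is dominated by the geometric
series `∑ₖ (2/5)(1/10)ᵏ = 4/9`, since `(k+1)² ≥ 3k + 1` for natural `k`, `e⁻¹ ≤ 2/5` and
`e⁻³ ≤ 1/10`. Hence the denominator is at most `2a`, while the numerator is `1` within
a cluster and at least `e^{-n²}` between clusters.
-/

open Finset

/-- SNE input affinity with scales σᵢ = 2^{-1/2}:
`p(xᵢ,xⱼ) = exp(-‖xᵢ-xⱼ‖²) / ∑_{ℓ≠i} exp(-‖xᵢ-x_ℓ‖²)`. -/
noncomputable def sneP {D k : ℕ} (x : Fin k → EuclideanSpace ℝ (Fin D)) (i j : Fin k) : ℝ :=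
  Real.exp (-‖x i - x j‖ ^ 2) / ∑ ℓ ∈ Finset.univ.erase i, Real.exp (-‖x i - x ℓ‖ ^ 2)

/-- SNE output affinity `q(ψᵢ,ψⱼ) = exp(-‖ψᵢ-ψⱼ‖²) / ∑_{ℓ≠i} exp(-‖ψᵢ-ψ_ℓ‖²)`. -/
noncomputable def sneQ {d k : ℕ} (ψ : Fin k → EuclideanSpace ℝ (Fin d)) (i j : Fin k) : ℝ :=
  Real.exp (-‖ψ i - ψ j‖ ^ 2) / ∑ ℓ ∈ Finset.univ.erase i, Real.exp (-‖ψ i - ψ ℓ‖ ^ 2)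

/-- SNE loss `L(ψ) = -∑ᵢ ∑_{j≠i} p(xᵢ,xⱼ) log q(ψᵢ,ψⱼ)`. -/
noncomputable def sneLoss {D d k : ℕ} (x : Fin k → EuclideanSpace ℝ (Fin D))
    (ψ : Fin k → EuclideanSpace ℝ (Fin d)) : ℝ :=
  -∑ i : Fin k, ∑ j ∈ Finset.univ.erase i, sneP x i j * Real.log (sneQ ψ i j)

/-- The number of indices ℓ with ψ_ℓ in the closed ball centered at ψᵢ of radius ‖ψⱼ-ψᵢ‖. -/
noncomputable def ballCount {d k : ℕ} (ψ : Fin k → EuclideanSpace ℝ (Fin d)) (i j : Fin k) : ℕ :=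
  (Finset.univ.filter (fun ℓ => ‖ψ ℓ - ψ i‖ ≤ ‖ψ j - ψ i‖)).card

/-- Quality of an embedding:
`Q(ψ) = (1/n) ∑ₘ (1/(a(a-1))) ∑_{(i,j) distinct in cluster m} log |ψ ∩ B(ψᵢ, ‖ψⱼ-ψᵢ‖)|`. -/
noncomputable def quality {d k : ℕ} (n a : ℕ) (cl : Fin k → Fin n)
    (ψ : Fin k → EuclideanSpace ℝ (Fin d)) : ℝ :=
  (1 / (n : ℝ)) * ∑ m : Fin n, (1 / ((a : ℝ) * ((a : ℝ) - 1))) *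
    ∑ i ∈ Finset.univ.filter (fun i => cl i = m),
      ∑ j ∈ (Finset.univ.filter (fun j => cl j = m)).erase i,
        Real.log (ballCount ψ i j)

/-- Generalized output affinity `q₂(ψᵢ,ψⱼ) = f(‖ψᵢ-ψⱼ‖) / ∑_{ℓ≠i} f(‖ψᵢ-ψ_ℓ‖)`. -/
noncomputable def genQ {d k : ℕ} (f : ℝ → ℝ) (ψ : Fin k → EuclideanSpace ℝ (Fin d))
    (i j : Fin k) : ℝ :=
  f ‖ψ i - ψ j‖ / ∑ ℓ ∈ Finset.univ.erase i, f ‖ψ i - ψ ℓ‖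

/-- Generalized loss `L₂(ψ) = -∑ᵢ ∑_{j≠i} p(xᵢ,xⱼ) log q₂(ψᵢ,ψⱼ)`. -/
noncomputable def genLoss {D d k : ℕ} (f : ℝ → ℝ) (x : Fin k → EuclideanSpace ℝ (Fin D))
    (ψ : Fin k → EuclideanSpace ℝ (Fin d)) : ℝ :=
  -∑ i : Fin k, ∑ j ∈ Finset.univ.erase i, sneP x i j * Real.log (genQ f ψ i j)

lemma exp_neg_succ_sq_le (k : ℕ) :
    Real.exp (-((k : ℝ) + 1) ^ 2) ≤ 2 / 5 * (1 / 10) ^ k := by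
  have h1 : Real.exp (-1) ≤ 2 / 5 := by
    have := Real.exp_neg_one_lt_d9
    linarith
  have h3 : Real.exp (-3) ≤ 1 / 10 := by
    have h : Real.exp (-3) = Real.exp (-1) ^ 3 := by
      rw [← Real.exp_nat_mul]; norm_num
    rw [h]
    calc Real.exp (-1) ^ 3 ≤ (2 / 5) ^ 3 := by gcongr
      _ ≤ 1 / 10 := by norm_num
  have hk : (0 : ℝ) ≤ (k : ℝ) ^ 2 - k := by
    have : (k : ℝ) ≤ (k : ℝ) ^ 2 := by exact_mod_cast Nat.le_self_pow two_ne_zero k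
    linarith
  calc Real.exp (-((k : ℝ) + 1) ^ 2) ≤ Real.exp (-1 + k * (-3)) := by
        apply Real.exp_le_exp.mpr
        nlinarith
    _ = Real.exp (-1) * Real.exp (-3) ^ k := by rw [Real.exp_add, Real.exp_nat_mul]
    _ ≤ 2 / 5 * (1 / 10) ^ k := by gcongr

/-- One tail of the Gaussian sum. -/
lemma sum_exp_neg_succ_sq_le (N : ℕ) :
    ∑ k ∈ Finset.range N, Real.exp (-((k : ℝ) + 1) ^ 2) ≤ 1 / 2 := by
  have h : ∑ k ∈ Finset.range N, Real.exp (-((k : ℝ) + 1) ^ 2)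
      ≤ ∑ k ∈ Finset.range N, 2 / 5 * (1 / 10 : ℝ) ^ k :=
    Finset.sum_le_sum fun k _ => exp_neg_succ_sq_le k
  rw [← Finset.mul_sum, geom_sum_eq (by norm_num)] at h
  have hpow : (0 : ℝ) < (1 / 10) ^ N := by positivity
  have hgeom : 2 / 5 * (((1 / 10 : ℝ) ^ N - 1) / (1 / 10 - 1)) = 4 / 9 * (1 - (1 / 10) ^ N) := by
    ring
  linarith

/-- The Gaussian sum centred at a natural number `c`, over any initial segment of `ℕ`. -/
lemma sum_exp_neg_sub_sq_le (c n : ℕ) :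
    ∑ t ∈ Finset.range n, Real.exp (-((c : ℝ) - t) ^ 2) ≤ 2 := by
  -- Enlarging the range so that it contains `c` lets the sum split at its centre.
  have hsub : Finset.range n ⊆ Finset.range (c + 1 + n) :=
    Finset.range_subset_range.mpr (by omega)
  refine (Finset.sum_le_sum_of_subset_of_nonneg hsub fun _ _ _ => (Real.exp_pos _).le).trans ?_
  rw [Finset.sum_range_add, Finset.sum_range_succ, ← Finset.sum_range_reflect]
  have hl : ∑ k ∈ Finset.range c, Real.exp (-((c : ℝ) - ((c - 1 - k : ℕ) : ℝ)) ^ 2) ≤ 1 / 2 := by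
    refine le_trans (le_of_eq (Finset.sum_congr rfl fun k hk => ?_)) (sum_exp_neg_succ_sq_le c)
    have hk' := Finset.mem_range.mp hk
    have : (c : ℝ) = ((c - 1 - k : ℕ) : ℝ) + k + 1 := by
      exact_mod_cast (by omega : c = c - 1 - k + k + 1)
    congr 2
    congr 1
    linarith
  have hr : ∑ k ∈ Finset.range n, Real.exp (-((c : ℝ) - ((c + 1 + k : ℕ) : ℝ)) ^ 2) ≤ 1 / 2 := by
    refine le_trans (le_of_eq (Finset.sum_congr rfl fun k _ => ?_)) (sum_exp_neg_succ_sq_le n)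
    congr 1
    push_cast
    ring
  have hc : Real.exp (-((c : ℝ) - c) ^ 2) = 1 := by simp
  linarith

/-- for the embedding ψ⁰ sending cluster Bₘ to (m,0,…,0) ∈ ℝ^d and all i ≠ j:
same cluster gives q(ψ⁰ᵢ,ψ⁰ⱼ) ≥ 1/(2a), different clusters give q(ψ⁰ᵢ,ψ⁰ⱼ) ≥ e^{-n²}/(2a). -/
theorem sneQ_lower_special_embedding_cases
    (D d n a : ℕ) (hD : 0 < D) (hd : 0 < d) (hn : 2 ≤ n) (ha : 2 ≤ a)
    (x : Fin (n * a) → EuclideanSpace ℝ (Fin D))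
    (cl : Fin (n * a) → Fin n)
    (hsize : ∀ m : Fin n, (Finset.univ.filter (fun i => cl i = m)).card = a)
    (ψ0 : Fin (n * a) → EuclideanSpace ℝ (Fin d))
    (hψ0 : ∀ i, ψ0 i = EuclideanSpace.single (⟨0, hd⟩ : Fin d) (((cl i : ℕ) + 1 : ℝ)))
    (i j : Fin (n * a)) (hij : i ≠ j) :
    (cl i = cl j → 1 / (2 * a) ≤ sneQ ψ0 i j) ∧
    (cl i ≠ cl j → Real.exp (-(n : ℝ) ^ 2) / (2 * a) ≤ sneQ ψ0 i j) := by
  have hnorm : ∀ u v, ‖ψ0 u - ψ0 v‖ ^ 2 = (((cl u : ℕ) : ℝ) - ((cl v : ℕ) : ℝ)) ^ 2 := by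
    intro u v
    rw [hψ0, hψ0, ← dist_eq_norm, PiLp.dist_single_same, Real.dist_eq, sq_abs]
    ring
  have hden : ∑ ℓ ∈ Finset.univ.erase i, Real.exp (-‖ψ0 i - ψ0 ℓ‖ ^ 2) ≤ 2 * a := by
    calc ∑ ℓ ∈ Finset.univ.erase i, Real.exp (-‖ψ0 i - ψ0 ℓ‖ ^ 2)
        ≤ ∑ ℓ, Real.exp (-‖ψ0 i - ψ0 ℓ‖ ^ 2) :=
          Finset.sum_le_sum_of_subset_of_nonneg (Finset.erase_subset _ _)
            fun _ _ _ => (Real.exp_pos _).le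
      _ = ∑ m : Fin n, ∑ ℓ with cl ℓ = m, Real.exp (-‖ψ0 i - ψ0 ℓ‖ ^ 2) :=
          (Finset.sum_fiberwise _ _ _).symm
      _ = ∑ m : Fin n, a * Real.exp (-(((cl i : ℕ) : ℝ) - ((m : ℕ) : ℝ)) ^ 2) := by
          refine Finset.sum_congr rfl fun m _ => ?_
          rw [Finset.sum_eq_card_nsmul
            (b := Real.exp (-(((cl i : ℕ) : ℝ) - ((m : ℕ) : ℝ)) ^ 2))
            fun ℓ hℓ => by rw [hnorm, (Finset.mem_filter.mp hℓ).2], hsize m, nsmul_eq_mul]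
      _ = a * ∑ t ∈ Finset.range n, Real.exp (-(((cl i : ℕ) : ℝ) - (t : ℝ)) ^ 2) := by
          rw [← Finset.mul_sum,
            Fin.sum_univ_eq_sum_range (fun t => Real.exp (-(((cl i : ℕ) : ℝ) - (t : ℝ)) ^ 2)) n]
      _ ≤ a * 2 := by
          gcongr
          exact sum_exp_neg_sub_sq_le _ _
      _ = 2 * a := mul_comm _ _
  have hpos : 0 < ∑ ℓ ∈ Finset.univ.erase i, Real.exp (-‖ψ0 i - ψ0 ℓ‖ ^ 2) :=
    Finset.sum_pos (fun _ _ => Real.exp_pos _)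
      ⟨j, Finset.mem_erase.mpr ⟨hij.symm, Finset.mem_univ _⟩⟩
  unfold sneQ
  constructor
  · intro h
    have hnum : Real.exp (-‖ψ0 i - ψ0 j‖ ^ 2) = 1 := by rw [hnorm, h]; simp
    rw [hnum]
    gcongr
  · intro _
    have hnum : Real.exp (-(n : ℝ) ^ 2) ≤ Real.exp (-‖ψ0 i - ψ0 j‖ ^ 2) := by
      rw [hnorm]
      apply Real.exp_le_exp.mpr
      have hi : ((cl i : ℕ) : ℝ) ≤ n := by exact_mod_cast (cl i).isLt.le
      have hj : ((cl j : ℕ) : ℝ) ≤ n := by exact_mod_cast (cl j).isLt.le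
      have hi0 : (0 : ℝ) ≤ ((cl i : ℕ) : ℝ) := by positivity
      have hj0 : (0 : ℝ) ≤ ((cl j : ℕ) : ℝ) := by positivity
      exact neg_le_neg (sq_le_sq' (by linarith) (by linarith))
    gcongr
end

section
/- Let f : [0,∞) → (0,∞) be monotonically decreasing with ∑_{k=1}^∞ f(k) < ∞, and suppose there exist α, β > 0 with f(x) ≥ α·e^{−βx²} for all x ≥ 0. Then there exists a constant C > 0 depending only on f such that the following holds: for all positive integers D, d, n, a with a ≥ 2 and n ≥ 2 and all clustered data satisfying the setup assumptions, any embedding ψ* attaining a global minimum of the generalized loss L₂ satisfies Q(ψ*) ≤ C·log(2a). -/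
/-!
The proof compares the minimizer with an explicit competitor.

*Lower bound on the loss.* Since `f` is decreasing, every point of the ball around `ψᵢ` through `ψⱼ`
contributes at least `f ‖ψᵢ - ψⱼ‖` to the normalizing sum, so `-log q₂(ψᵢ, ψⱼ) ≥ log (b - 1)`, where
`b` is the number of points in that ball (`log_ballCount_le`). Inside a cluster the input affinity
is at least `1 / (2e(a - 1))` (`sneP_lower`), because the separation makes the mass outside the
cluster negligible. Hence `Q(ψ) ≤ log 2 + 2e L₂(ψ) / (na)` (`quality_le_loss`).

*Upper bound on the minimal loss.* Collapse the `m`-th cluster to the point `m` of a line. All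
normalizing sums are then at most `a ∑_{z ∈ ℤ} f |z|`, so the bound `-log f(t) ≤ -log α + β t²` gives
each row of the loss a contribution `log a + O(1)` plus `β n²` times the mass that the input
affinities put outside the cluster. That mass is at most `2e / n⁴` (`sneP_cross`), so
`L₂ ≤ na (log a + O(1))` (`lineEmb_loss`). Combining the two bounds proves the theorem.
-/

open Finset

/-- A decreasing profile `f`, summable over the positive integers, is summable over `ℤ` after
reflection. -/
lemma summable_abs_int {f : ℝ → ℝ} (hsum : Summable (fun k : ℕ => f ((k : ℝ) + 1))) :
    Summable (fun z : ℤ => f |(z : ℝ)|) := by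
  have h : Summable (fun k : ℕ => f (k : ℝ)) := by
    rw [← summable_nat_add_iff 1]
    simpa using hsum
  apply Summable.of_nat_of_neg <;> simpa using h

/-! ### Input affinities of clustered data -/

section Clusters

variable {D n a : ℕ} {x : Fin (n * a) → EuclideanSpace ℝ (Fin D)} {cl : Fin (n * a) → Fin n}

/-- The indices other than `i` in the cluster of `i`. -/
def mates (cl : Fin (n * a) → Fin n) (i : Fin (n * a)) : Finset (Fin (n * a)) :=
  (Finset.univ.filter (fun j => cl j = cl i)).erase i

/-- The indices outside the cluster of `i`. -/
def strangers (cl : Fin (n * a) → Fin n) (i : Fin (n * a)) : Finset (Fin (n * a)) :=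
  Finset.univ.filter (fun j => cl j ≠ cl i)

lemma sum_erase_split (i : Fin (n * a)) (g : Fin (n * a) → ℝ) :
    ∑ j ∈ Finset.univ.erase i, g j = ∑ j ∈ mates cl i, g j + ∑ j ∈ strangers cl i, g j := by
  rw [← Finset.sum_filter_add_sum_filter_not (Finset.univ.erase i) (fun j => cl j = cl i)]
  congr 1
  · apply Finset.sum_congr _ (fun _ _ => rfl)
    ext j; simp [mates]
  · apply Finset.sum_congr _ (fun _ _ => rfl)
    ext j
    simp only [strangers, Finset.mem_filter, Finset.mem_erase, Finset.mem_univ, true_and, and_true]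
    exact ⟨fun h => h.2, fun h => ⟨fun e => h (by rw [e]), h⟩⟩

lemma card_mates (ha : 2 ≤ a)
    (hcard : ∀ m : Fin n, (Finset.univ.filter (fun i => cl i = m)).card = a) (i : Fin (n * a)) :
    ((mates cl i).card : ℝ) = a - 1 := by
  rw [mates, Finset.card_erase_of_mem (by simp), hcard, Nat.cast_sub (by omega), Nat.cast_one]

/-- The unnormalized affinity outside the cluster of `i` is at most `n a · n⁻⁵`. -/
lemma strangers_mass (hn : 2 ≤ n)
    (hsep : ∀ i j : Fin (n * a), cl i ≠ cl j → Real.sqrt (5 * Real.log n) ≤ ‖x i - x j‖)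
    (i : Fin (n * a)) :
    ∑ j ∈ strangers cl i, Real.exp (-‖x i - x j‖ ^ 2) ≤ a / (n : ℝ) ^ 4 := by
  have hn0 : (0 : ℝ) < n := by positivity
  have hlog : 0 ≤ Real.log n := Real.log_natCast_nonneg n
  have h1 : ∀ j ∈ strangers cl i, Real.exp (-‖x i - x j‖ ^ 2) ≤ 1 / (n : ℝ) ^ 5 := by
    intro j hj
    have hj' : cl j ≠ cl i := by simpa [strangers] using hj
    have h2 : 5 * Real.log n ≤ ‖x i - x j‖ ^ 2 :=
      (Real.sqrt_le_left (norm_nonneg _)).1 (hsep i j hj'.symm)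
    calc Real.exp (-‖x i - x j‖ ^ 2) ≤ Real.exp (-(5 * Real.log n)) :=
          Real.exp_le_exp.2 (by linarith)
      _ = 1 / (n : ℝ) ^ 5 := by
          rw [Real.exp_neg, show (5 : ℝ) * Real.log n = ((5 : ℕ) : ℝ) * Real.log n by norm_num,
            Real.exp_nat_mul, Real.exp_log hn0, one_div]
  have hc : ((strangers cl i).card : ℝ) ≤ n * a := by
    have := Finset.card_le_univ (strangers cl i)
    rw [Fintype.card_fin] at this
    exact_mod_cast this
  calc _ ≤ (strangers cl i).card • (1 / (n : ℝ) ^ 5) := Finset.sum_le_card_nsmul _ _ _ h1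
    _ ≤ (n * a) * (1 / (n : ℝ) ^ 5) := by rw [nsmul_eq_mul]; gcongr
    _ = a / (n : ℝ) ^ 4 := by field_simp

lemma sneZ_lower (ha : 2 ≤ a)
    (hcard : ∀ m : Fin n, (Finset.univ.filter (fun i => cl i = m)).card = a)
    (hdiam : ∀ i j : Fin (n * a), cl i = cl j → ‖x i - x j‖ ≤ 1) (i : Fin (n * a)) :
    ((a : ℝ) - 1) * Real.exp (-1) ≤ ∑ ℓ ∈ Finset.univ.erase i, Real.exp (-‖x i - x ℓ‖ ^ 2) := by
  rw [sum_erase_split (cl := cl) i, ← card_mates ha hcard i, ← nsmul_eq_mul]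
  have h1 : ∀ j ∈ mates cl i, Real.exp (-1) ≤ Real.exp (-‖x i - x j‖ ^ 2) := by
    intro j hj
    have hj' : cl i = cl j := by
      simp only [mates, Finset.mem_erase, Finset.mem_filter, Finset.mem_univ, true_and] at hj
      exact hj.2.symm
    have := pow_le_one₀ (n := 2) (norm_nonneg _) (hdiam i j hj')
    exact Real.exp_le_exp.2 (by linarith)
  have h2 := Finset.card_nsmul_le_sum _ _ _ h1
  have h3 : 0 ≤ ∑ j ∈ strangers cl i, Real.exp (-‖x i - x j‖ ^ 2) :=
    Finset.sum_nonneg fun _ _ => (Real.exp_pos _).le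
  linarith

lemma sneZ_upper (hn : 2 ≤ n) (ha : 2 ≤ a)
    (hcard : ∀ m : Fin n, (Finset.univ.filter (fun i => cl i = m)).card = a)
    (hsep : ∀ i j : Fin (n * a), cl i ≠ cl j → Real.sqrt (5 * Real.log n) ≤ ‖x i - x j‖)
    (i : Fin (n * a)) :
    ∑ ℓ ∈ Finset.univ.erase i, Real.exp (-‖x i - x ℓ‖ ^ 2) ≤ 2 * ((a : ℝ) - 1) := by
  rw [sum_erase_split (cl := cl) i]
  have h1 : ∀ j ∈ mates cl i, Real.exp (-‖x i - x j‖ ^ 2) ≤ 1 := fun j _ =>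
    Real.exp_le_one_iff.2 (by nlinarith [sq_nonneg ‖x i - x j‖])
  have h2 := Finset.sum_le_card_nsmul _ _ _ h1
  rw [nsmul_eq_mul, card_mates ha hcard, mul_one] at h2
  have h3 := strangers_mass hn hsep i
  have ha' : (2 : ℝ) ≤ a := by exact_mod_cast ha
  have hn' : (2 : ℝ) ≤ n := by exact_mod_cast hn
  have h4 : (2 : ℝ) ^ 4 ≤ (n : ℝ) ^ 4 := by gcongr
  have h5 : a / (n : ℝ) ^ 4 ≤ a / 2 ^ 4 := by gcongr
  linarith

lemma sneP_lower (hn : 2 ≤ n) (ha : 2 ≤ a)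
    (hcard : ∀ m : Fin n, (Finset.univ.filter (fun i => cl i = m)).card = a)
    (hdiam : ∀ i j : Fin (n * a), cl i = cl j → ‖x i - x j‖ ≤ 1)
    (hsep : ∀ i j : Fin (n * a), cl i ≠ cl j → Real.sqrt (5 * Real.log n) ≤ ‖x i - x j‖)
    (i j : Fin (n * a)) (hij : cl i = cl j) :
    Real.exp (-1) / (2 * ((a : ℝ) - 1)) ≤ sneP x i j := by
  have ha' : (2 : ℝ) ≤ a := by exact_mod_cast ha
  have hZ := sneZ_lower ha hcard hdiam i
  have hZ0 : 0 < ((a : ℝ) - 1) * Real.exp (-1) := mul_pos (by linarith) (Real.exp_pos _)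
  have h1 : Real.exp (-1) ≤ Real.exp (-‖x i - x j‖ ^ 2) := by
    have := pow_le_one₀ (n := 2) (norm_nonneg _) (hdiam i j hij)
    exact Real.exp_le_exp.2 (by linarith)
  exact div_le_div₀ (Real.exp_pos _).le h1 (by linarith) (sneZ_upper hn ha hcard hsep i)

lemma sneP_cross (hn : 2 ≤ n) (ha : 2 ≤ a)
    (hcard : ∀ m : Fin n, (Finset.univ.filter (fun i => cl i = m)).card = a)
    (hdiam : ∀ i j : Fin (n * a), cl i = cl j → ‖x i - x j‖ ≤ 1)
    (hsep : ∀ i j : Fin (n * a), cl i ≠ cl j → Real.sqrt (5 * Real.log n) ≤ ‖x i - x j‖)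
    (i : Fin (n * a)) :
    ∑ j ∈ strangers cl i, sneP x i j ≤ 2 * Real.exp 1 / (n : ℝ) ^ 4 := by
  have ha' : (2 : ℝ) ≤ a := by exact_mod_cast ha
  have hn0 : (0 : ℝ) < n := by positivity
  have hZ0 : 0 < ((a : ℝ) - 1) * Real.exp (-1) := mul_pos (by linarith) (Real.exp_pos _)
  simp only [sneP, ← Finset.sum_div]
  calc _ ≤ (a / (n : ℝ) ^ 4) / (((a : ℝ) - 1) * Real.exp (-1)) :=
        div_le_div₀ (by positivity) (strangers_mass hn hsep i) hZ0
          (sneZ_lower ha hcard hdiam i)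
    _ = (a / ((a : ℝ) - 1)) * (Real.exp 1 / (n : ℝ) ^ 4) := by
        rw [Real.exp_neg]; field_simp
    _ ≤ 2 * (Real.exp 1 / (n : ℝ) ^ 4) := by
        gcongr
        rw [div_le_iff₀ (by linarith)]; linarith
    _ = _ := by ring

lemma sneP_nonneg (i j : Fin (n * a)) : 0 ≤ sneP x i j :=
  div_nonneg (Real.exp_pos _).le (Finset.sum_nonneg fun _ _ => (Real.exp_pos _).le)

lemma sneP_sum (ha : 2 ≤ a)
    (hcard : ∀ m : Fin n, (Finset.univ.filter (fun i => cl i = m)).card = a)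
    (hdiam : ∀ i j : Fin (n * a), cl i = cl j → ‖x i - x j‖ ≤ 1) (i : Fin (n * a)) :
    ∑ j ∈ Finset.univ.erase i, sneP x i j = 1 := by
  have ha' : (2 : ℝ) ≤ a := by exact_mod_cast ha
  have hZ0 : 0 < ((a : ℝ) - 1) * Real.exp (-1) := mul_pos (by linarith) (Real.exp_pos _)
  simp only [sneP, ← Finset.sum_div]
  exact div_self (hZ0.trans_le (sneZ_lower ha hcard hdiam i)).ne'

end Clusters

/-! ### Output affinities and ball counts -/

section Lower

variable {f : ℝ → ℝ} {d k : ℕ} {ψ : Fin k → EuclideanSpace ℝ (Fin d)}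

lemma genQ_pos (hpos : ∀ t : ℝ, 0 ≤ t → 0 < f t) {i j : Fin k} (hij : j ≠ i) :
    0 < genQ f ψ i j :=
  div_pos (hpos _ (norm_nonneg _))
    (Finset.sum_pos (fun _ _ => hpos _ (norm_nonneg _)) ⟨j, by simp [hij]⟩)

lemma log_genQ_nonpos (hpos : ∀ t : ℝ, 0 ≤ t → 0 < f t) {i j : Fin k} (hij : j ≠ i) :
    Real.log (genQ f ψ i j) ≤ 0 := by
  refine Real.log_nonpos (genQ_pos hpos hij).le (div_le_one_of_le₀ ?_ ?_)
  · exact Finset.single_le_sum (f := fun ℓ => f ‖ψ i - ψ ℓ‖)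
      (fun _ _ => (hpos _ (norm_nonneg _)).le) (by simp [hij])
  · exact Finset.sum_nonneg fun _ _ => (hpos _ (norm_nonneg _)).le

/-- Every index in the ball other than `i` contributes at least `f ‖ψᵢ - ψⱼ‖` to the denominator of
`q₂(ψᵢ, ψⱼ)`; the term `log 2` absorbs the centre of the ball. -/
lemma log_ballCount_le (hpos : ∀ t : ℝ, 0 ≤ t → 0 < f t)
    (hdecr : ∀ s t : ℝ, 0 ≤ s → s ≤ t → f t ≤ f s) {i j : Fin k} (hij : j ≠ i) :
    Real.log (ballCount ψ i j) ≤ Real.log 2 - Real.log (genQ f ψ i j) := by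
  set B := Finset.univ.filter (fun ℓ => ‖ψ ℓ - ψ i‖ ≤ ‖ψ j - ψ i‖) with hB
  have hiB : i ∈ B := by simp [hB]
  have hjB : j ∈ B.erase i := by simp [hB, hij]
  have hb : ballCount ψ i j = (B.erase i).card + 1 := by
    rw [Finset.card_erase_add_one hiB]; rfl
  have hc : 1 ≤ (B.erase i).card := Finset.card_pos.2 ⟨j, hjB⟩
  have hc' : (1 : ℝ) ≤ (B.erase i).card := by exact_mod_cast hc
  have hfr := hpos ‖ψ i - ψ j‖ (norm_nonneg _)
  have h1 : (B.erase i).card • f ‖ψ i - ψ j‖ ≤ ∑ ℓ ∈ B.erase i, f ‖ψ i - ψ ℓ‖ := by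
    refine Finset.card_nsmul_le_sum _ _ _ fun ℓ hℓ => hdecr _ _ (norm_nonneg _) ?_
    have : ‖ψ ℓ - ψ i‖ ≤ ‖ψ j - ψ i‖ := by
      simpa [hB] using (Finset.mem_filter.1 (Finset.mem_of_mem_erase hℓ)).2
    rwa [norm_sub_rev (ψ i), norm_sub_rev (ψ i)]
  have h2 : ∑ ℓ ∈ B.erase i, f ‖ψ i - ψ ℓ‖ ≤ ∑ ℓ ∈ Finset.univ.erase i, f ‖ψ i - ψ ℓ‖ :=
    Finset.sum_le_sum_of_subset_of_nonneg (Finset.erase_subset_erase _ (Finset.subset_univ _))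
      fun _ _ _ => (hpos _ (norm_nonneg _)).le
  rw [nsmul_eq_mul] at h1
  have hZ : 0 < ∑ ℓ ∈ Finset.univ.erase i, f ‖ψ i - ψ ℓ‖ := by
    have : 0 < ((B.erase i).card : ℝ) * f ‖ψ i - ψ j‖ := by positivity
    linarith
  have h3 : ((B.erase i).card : ℝ) * genQ f ψ i j ≤ 1 := by
    rw [genQ, mul_div_assoc']
    exact div_le_one_of_le₀ (h1.trans h2) hZ.le
  have hq := genQ_pos (ψ := ψ) hpos hij
  have h4 : Real.log (ballCount ψ i j) + Real.log (genQ f ψ i j) ≤ Real.log 2 := by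
    rw [← Real.log_mul (by rw [hb]; positivity) hq.ne']
    apply Real.log_le_log
    · rw [hb]; positivity
    · rw [hb]; push_cast; nlinarith
  linarith

end Lower

/-! ### Quality, loss, and the line embedding -/

section Main

variable {f : ℝ → ℝ} {D d n a : ℕ} {x : Fin (n * a) → EuclideanSpace ℝ (Fin D)}
  {cl : Fin (n * a) → Fin n}

lemma quality_eq (ψ : Fin (n * a) → EuclideanSpace ℝ (Fin d)) :
    quality n a cl ψ = (1 / (n : ℝ)) * ((1 / ((a : ℝ) * ((a : ℝ) - 1))) *
      ∑ i, ∑ j ∈ mates cl i, Real.log (ballCount ψ i j)) := by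
  rw [quality, ← Finset.mul_sum, ← Finset.sum_fiberwise Finset.univ cl]
  congr 2
  refine Finset.sum_congr rfl fun m _ => Finset.sum_congr rfl fun i hi => ?_
  rw [mates, (Finset.mem_filter.1 hi).2]

/-- The loss controls the quality: cluster pairs carry affinity at least `1 / (2e(a - 1))`, and the
remaining terms of the loss are nonnegative. -/
lemma quality_le_loss (hpos : ∀ t : ℝ, 0 ≤ t → 0 < f t)
    (hdecr : ∀ s t : ℝ, 0 ≤ s → s ≤ t → f t ≤ f s) (hn : 2 ≤ n) (ha : 2 ≤ a)
    (hcard : ∀ m : Fin n, (Finset.univ.filter (fun i => cl i = m)).card = a)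
    (hdiam : ∀ i j : Fin (n * a), cl i = cl j → ‖x i - x j‖ ≤ 1)
    (hsep : ∀ i j : Fin (n * a), cl i ≠ cl j → Real.sqrt (5 * Real.log n) ≤ ‖x i - x j‖)
    (ψ : Fin (n * a) → EuclideanSpace ℝ (Fin d)) :
    quality n a cl ψ ≤ Real.log 2 + 2 * Real.exp 1 * (genLoss f x ψ / (n * a)) := by
  have ha' : (2 : ℝ) ≤ a := by exact_mod_cast ha
  have ha1 : (0 : ℝ) < (a : ℝ) - 1 := by linarith
  have hn0 : (0 : ℝ) < n := by positivity
  have hrow : ∀ i : Fin (n * a), ∑ j ∈ mates cl i, Real.log (ballCount ψ i j) ≤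
      ((a : ℝ) - 1) * Real.log 2 + 2 * ((a : ℝ) - 1) * Real.exp 1 *
        ∑ j ∈ Finset.univ.erase i, -(sneP x i j * Real.log (genQ f ψ i j)) := by
    intro i
    have h1 : ∑ j ∈ mates cl i, -(sneP x i j * Real.log (genQ f ψ i j)) ≤
        ∑ j ∈ Finset.univ.erase i, -(sneP x i j * Real.log (genQ f ψ i j)) := by
      refine Finset.sum_le_sum_of_subset_of_nonneg
        (Finset.erase_subset_erase _ (Finset.subset_univ _)) fun j hj _ => ?_
      have := log_genQ_nonpos (ψ := ψ) hpos (Finset.ne_of_mem_erase hj)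
      have := sneP_nonneg (x := x) i j
      nlinarith
    have h2 : ∀ j ∈ mates cl i, Real.log (ballCount ψ i j) ≤ Real.log 2 +
        2 * ((a : ℝ) - 1) * Real.exp 1 * -(sneP x i j * Real.log (genQ f ψ i j)) := by
      intro j hj
      have hji : j ≠ i := Finset.ne_of_mem_erase hj
      have hcl : cl j = cl i := (Finset.mem_filter.1 (Finset.mem_of_mem_erase hj)).2
      have h3 := log_ballCount_le (ψ := ψ) hpos hdecr hji
      have h4 := log_genQ_nonpos (ψ := ψ) hpos hji
      have h5 := sneP_lower hn ha hcard hdiam hsep i j hcl.symm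
      have h6 : 1 ≤ 2 * ((a : ℝ) - 1) * Real.exp 1 * sneP x i j := by
        calc (1 : ℝ) = 2 * ((a : ℝ) - 1) * Real.exp 1 *
              (Real.exp (-1) / (2 * ((a : ℝ) - 1))) := by
              rw [Real.exp_neg]; field_simp
          _ ≤ _ := by gcongr
      nlinarith
    calc _ ≤ ∑ j ∈ mates cl i, (Real.log 2 +
        2 * ((a : ℝ) - 1) * Real.exp 1 * -(sneP x i j * Real.log (genQ f ψ i j))) :=
          Finset.sum_le_sum h2
      _ = ((a : ℝ) - 1) * Real.log 2 + 2 * ((a : ℝ) - 1) * Real.exp 1 *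
          ∑ j ∈ mates cl i, -(sneP x i j * Real.log (genQ f ψ i j)) := by
          rw [Finset.sum_add_distrib, Finset.sum_const, nsmul_eq_mul, card_mates ha hcard,
            Finset.mul_sum]
      _ ≤ _ := by gcongr
  have htot : ∑ i, ∑ j ∈ mates cl i, Real.log (ballCount ψ i j) ≤
      (n * a) * (((a : ℝ) - 1) * Real.log 2) +
        2 * ((a : ℝ) - 1) * Real.exp 1 * genLoss f x ψ := by
    refine (Finset.sum_le_sum fun i _ => hrow i).trans_eq ?_
    rw [Finset.sum_add_distrib, Finset.sum_const, ← Finset.mul_sum, genLoss]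
    simp [Finset.sum_neg_distrib]
  rw [quality_eq]
  calc _ ≤ (1 / (n : ℝ)) * ((1 / ((a : ℝ) * ((a : ℝ) - 1))) *
      ((n * a) * (((a : ℝ) - 1) * Real.log 2) +
        2 * ((a : ℝ) - 1) * Real.exp 1 * genLoss f x ψ)) := by gcongr
    _ = _ := by field_simp

/-- The competitor: the `m`-th cluster is collapsed to the point `m` of the first coordinate
axis. -/
noncomputable def lineEmb (hd : 0 < d) (cl : Fin (n * a) → Fin n) :
    Fin (n * a) → EuclideanSpace ℝ (Fin d) :=
  fun i => EuclideanSpace.single ⟨0, hd⟩ ((cl i : ℕ) : ℝ)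

lemma lineEmb_norm (hd : 0 < d) (i j : Fin (n * a)) :
    ‖lineEmb hd cl i - lineEmb hd cl j‖ = |((cl i : ℕ) : ℝ) - ((cl j : ℕ) : ℝ)| := by
  rw [← dist_eq_norm]
  exact PiLp.dist_single_same 2 (fun _ => ℝ) _ _ _

lemma lineEmb_Z (hpos : ∀ t : ℝ, 0 ≤ t → 0 < f t)
    (hs : Summable (fun z : ℤ => f |(z : ℝ)|)) (hd : 0 < d)
    (hcard : ∀ m : Fin n, (Finset.univ.filter (fun i => cl i = m)).card = a)
    (i : Fin (n * a)) :
    ∑ ℓ ∈ Finset.univ.erase i, f ‖lineEmb hd cl i - lineEmb hd cl ℓ‖ ≤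
      a * ∑' z : ℤ, f |(z : ℝ)| := by
  simp only [lineEmb_norm]
  calc _ ≤ ∑ ℓ, f |((cl i : ℕ) : ℝ) - ((cl ℓ : ℕ) : ℝ)| :=
        Finset.sum_le_sum_of_subset_of_nonneg (Finset.subset_univ _)
          fun _ _ _ => (hpos _ (abs_nonneg _)).le
    _ = ∑ m : Fin n, a * f |((cl i : ℕ) : ℝ) - ((m : ℕ) : ℝ)| := by
        rw [← Finset.sum_fiberwise Finset.univ cl]
        refine Finset.sum_congr rfl fun m _ => ?_
        rw [Finset.sum_congr rfl (g := fun _ => f |((cl i : ℕ) : ℝ) - ((m : ℕ) : ℝ)|)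
          (fun ℓ hℓ => by rw [(Finset.mem_filter.1 hℓ).2]), Finset.sum_const, hcard, nsmul_eq_mul]
    _ = a * ∑ m : Fin n, f |((cl i : ℕ) : ℝ) - ((m : ℕ) : ℝ)| := by rw [Finset.mul_sum]
    _ ≤ _ := by
        gcongr
        -- The offsets `cl i - m` are distinct integers.
        let e : Fin n → ℤ := fun m => ((cl i : ℕ) : ℤ) - ((m : ℕ) : ℤ)
        have he : Function.Injective e := fun m m' h => by
          apply Fin.ext; simp only [e] at h; omega
        have := hs.sum_le_tsum (Finset.univ.map ⟨e, he⟩)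
          (fun _ _ => (hpos _ (abs_nonneg _)).le)
        simpa [e] using this

lemma lineEmb_loss (hpos : ∀ t : ℝ, 0 ≤ t → 0 < f t)
    (hs : Summable (fun z : ℤ => f |(z : ℝ)|))
    {α β : ℝ} (hα : 0 < α) (hβ : 0 < β)
    (hlow : ∀ t : ℝ, 0 ≤ t → α * Real.exp (-β * t ^ 2) ≤ f t)
    (hd : 0 < d) (hn : 2 ≤ n) (ha : 2 ≤ a)
    (hcard : ∀ m : Fin n, (Finset.univ.filter (fun i => cl i = m)).card = a)
    (hdiam : ∀ i j : Fin (n * a), cl i = cl j → ‖x i - x j‖ ≤ 1)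
    (hsep : ∀ i j : Fin (n * a), cl i ≠ cl j → Real.sqrt (5 * Real.log n) ≤ ‖x i - x j‖) :
    genLoss f x (lineEmb hd cl) ≤ (n * a) * (Real.log a + Real.log (∑' z : ℤ, f |(z : ℝ)|)
      - Real.log α + 2 * Real.exp 1 * β) := by
  set M := ∑' z : ℤ, f |(z : ℝ)| with hM
  have hM0 : 0 < M := hs.tsum_pos (fun _ => (hpos _ (abs_nonneg _)).le) 0 (hpos _ (abs_nonneg _))
  have ha' : (2 : ℝ) ≤ a := by exact_mod_cast ha
  have hn' : (2 : ℝ) ≤ n := by exact_mod_cast hn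
  set K := Real.log a + Real.log M - Real.log α with hK
  have hterm : ∀ i j : Fin (n * a), j ≠ i → -Real.log (genQ f (lineEmb hd cl) i j) ≤
      K + β * (((cl i : ℕ) : ℝ) - ((cl j : ℕ) : ℝ)) ^ 2 := by
    intro i j hij
    have hf := hpos _ (norm_nonneg (lineEmb (d := d) hd cl i - lineEmb hd cl j))
    have hZ : 0 < ∑ ℓ ∈ Finset.univ.erase i, f ‖lineEmb hd cl i - lineEmb hd cl ℓ‖ :=
      Finset.sum_pos (fun _ _ => hpos _ (norm_nonneg _)) ⟨j, by simp [hij]⟩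
    rw [genQ, Real.log_div hf.ne' hZ.ne']
    have h1 := Real.log_le_log hZ (lineEmb_Z hpos hs hd hcard i)
    rw [Real.log_mul (by positivity) hM0.ne'] at h1
    have h2 := Real.log_le_log (by positivity)
      (hlow _ (norm_nonneg (lineEmb (d := d) hd cl i - lineEmb hd cl j)))
    rw [Real.log_mul hα.ne' (Real.exp_pos _).ne', Real.log_exp, lineEmb_norm, sq_abs,
      ← lineEmb_norm (d := d) hd] at h2
    linarith
  have hrow : ∀ i : Fin (n * a),
      ∑ j ∈ Finset.univ.erase i, -(sneP x i j * Real.log (genQ f (lineEmb hd cl) i j)) ≤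
      K + 2 * Real.exp 1 * β := by
    intro i
    calc _ ≤ ∑ j ∈ Finset.univ.erase i, (K * sneP x i j +
          β * (sneP x i j * (((cl i : ℕ) : ℝ) - ((cl j : ℕ) : ℝ)) ^ 2)) := by
          refine Finset.sum_le_sum fun j hj => ?_
          have h1 := hterm i j (Finset.ne_of_mem_erase hj)
          have h2 := sneP_nonneg (x := x) i j
          nlinarith
      _ = K + β * ∑ j ∈ Finset.univ.erase i,
          sneP x i j * (((cl i : ℕ) : ℝ) - ((cl j : ℕ) : ℝ)) ^ 2 := by
          rw [Finset.sum_add_distrib, ← Finset.mul_sum, ← Finset.mul_sum,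
            sneP_sum ha hcard hdiam, mul_one]
      _ = K + β * ∑ j ∈ strangers cl i,
          sneP x i j * (((cl i : ℕ) : ℝ) - ((cl j : ℕ) : ℝ)) ^ 2 := by
          rw [sum_erase_split (cl := cl), Finset.sum_eq_zero (s := mates cl i), zero_add]
          intro j hj
          rw [(Finset.mem_filter.1 (Finset.mem_of_mem_erase hj)).2]
          simp
      _ ≤ K + β * ∑ j ∈ strangers cl i, sneP x i j * (n : ℝ) ^ 2 := by
          refine add_le_add_right (mul_le_mul_of_nonneg_left (Finset.sum_le_sum fun j _ => ?_) hβ.le) _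
          refine mul_le_mul_of_nonneg_left ?_ (sneP_nonneg i j)
          have h1 : ((cl i : ℕ) : ℝ) < n := by exact_mod_cast (cl i).2
          have h2 : ((cl j : ℕ) : ℝ) < n := by exact_mod_cast (cl j).2
          have h3 : (0 : ℝ) ≤ ((cl i : ℕ) : ℝ) := by positivity
          have h4 : (0 : ℝ) ≤ ((cl j : ℕ) : ℝ) := by positivity
          exact sq_le_sq.2 (by rw [abs_of_nonneg (by linarith : (0 : ℝ) ≤ n)]; exact abs_le.2 ⟨by linarith, by linarith⟩)
      _ ≤ K + β * (2 * Real.exp 1 / (n : ℝ) ^ 4 * (n : ℝ) ^ 2) := by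
          rw [← Finset.sum_mul]
          gcongr
          exact sneP_cross hn ha hcard hdiam hsep i
      _ ≤ K + β * (2 * Real.exp 1) := by
          refine add_le_add_right (mul_le_mul_of_nonneg_left ?_ hβ.le) _
          rw [div_mul_eq_mul_div]
          refine div_le_of_le_mul₀ (by positivity) (by positivity) ?_
          gcongr
          · linarith
          · norm_num
      _ = _ := by ring
  calc genLoss f x (lineEmb hd cl)
      = ∑ i, ∑ j ∈ Finset.univ.erase i,
          -(sneP x i j * Real.log (genQ f (lineEmb hd cl) i j)) := by
        simp [genLoss, Finset.sum_neg_distrib]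
    _ ≤ ∑ _i : Fin (n * a), (K + 2 * Real.exp 1 * β) := Finset.sum_le_sum fun i _ => hrow i
    _ = _ := by simp; ring

end Main

/-! ### The quality of a global minimizer -/

/-- for f : [0,∞) → (0,∞) monotonically decreasing with ∑_{k=1}^∞ f(k) < ∞ and
f(x) ≥ α e^{-βx²} for some α,β > 0, there is a constant C = C_f > 0 such that for all
well-separated clustered data, any global minimizer ψ* of the generalized loss L₂ satisfies
Q(ψ*) ≤ C·log(2a). -/
theorem gen_embedding_guarantee
    (f : ℝ → ℝ)
    (hpos : ∀ t : ℝ, 0 ≤ t → 0 < f t)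
    (hdecr : ∀ s t : ℝ, 0 ≤ s → s ≤ t → f t ≤ f s)
    (hsum : Summable (fun k : ℕ => f ((k : ℝ) + 1)))
    (hlow : ∃ α β : ℝ, 0 < α ∧ 0 < β ∧ ∀ t : ℝ, 0 ≤ t → α * Real.exp (-β * t ^ 2) ≤ f t) :
    ∃ C : ℝ, 0 < C ∧
      ∀ (D d n a : ℕ), 0 < D → 0 < d → 2 ≤ n → 2 ≤ a →
      ∀ (x : Fin (n * a) → EuclideanSpace ℝ (Fin D))
        (cl : Fin (n * a) → Fin n),
        (∀ m : Fin n, (Finset.univ.filter (fun i => cl i = m)).card = a) →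
        (∀ i j : Fin (n * a), cl i = cl j → ‖x i - x j‖ ≤ 1) →
        (∀ i j : Fin (n * a), cl i ≠ cl j →
          Real.sqrt (5 * Real.log n) ≤ ‖x i - x j‖) →
        ∀ ψs : Fin (n * a) → EuclideanSpace ℝ (Fin d),
          (∀ ψ : Fin (n * a) → EuclideanSpace ℝ (Fin d),
            genLoss f x ψs ≤ genLoss f x ψ) →
          quality n a cl ψs ≤ C * Real.log (2 * a) := by
  obtain ⟨α, β, hα, hβ, hlow⟩ := hlow
  have hs := summable_abs_int hsum
  set A := Real.log (∑' z : ℤ, f |(z : ℝ)|) - Real.log α + 2 * Real.exp 1 * β with hA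
  refine ⟨1 + 2 * Real.exp 1 * (1 + |A|), by positivity, ?_⟩
  intro D d n a _ hd hn ha x cl hcard hdiam hsep ψs hmin
  have ha' : (2 : ℝ) ≤ a := by exact_mod_cast ha
  have hn0 : (0 : ℝ) < n := by positivity
  have h1 := quality_le_loss hpos hdecr hn ha hcard hdiam hsep ψs
  have h2 := (hmin (lineEmb hd cl)).trans
    (lineEmb_loss hpos hs hα hβ hlow hd hn ha hcard hdiam hsep)
  have h3 : genLoss f x ψs / (n * a) ≤ Real.log a + A := by
    rw [div_le_iff₀ (by positivity)]
    linarith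
  have h4 : Real.log (2 * a) = Real.log 2 + Real.log a :=
    Real.log_mul (by norm_num) (by positivity)
  have hl2 := Real.log_two_gt_d9
  have h5 : Real.log 2 ≤ Real.log a := Real.log_le_log (by norm_num) ha'
  have h6 : 1 ≤ Real.log (2 * a) := by linarith
  have h7 : Real.log a + A ≤ (1 + |A|) * Real.log (2 * a) := by
    nlinarith [le_abs_self A, abs_nonneg A]
  calc quality n a cl ψs ≤ Real.log 2 + 2 * Real.exp 1 * (genLoss f x ψs / (n * a)) := h1
    _ ≤ Real.log (2 * a) + 2 * Real.exp 1 * ((1 + |A|) * Real.log (2 * a)) := by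
        gcongr
        · linarith
        · exact h3.trans h7
    _ = _ := by ring
end
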